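/- (Statements Q and T) Let F = {f_i : B_i → int(B)} be a locally contractive piecewise continuous map on (B,{B_i}) with the separation property, with separation line S, and suppose k₀ ≥ 1 satisfies d := dist(F^{k₀}(B), S) > 0. Then there exist ε₁ ∈ (0, d/3) and k ≥ k₀ such that for every ε₁-perturbation G of F (locally contractive piecewise continuous, with partition {A_i} and separation line Ŝ) with all atoms of generation k of F and of G of diameter less than d/6, and for every word I ∈ {1,…,m}^k with nonempty atoms A = A_I(F) and Â = A_I(G): there is a unique index i such that A ⊆ int(B_i), for this same index i one has Â ⊆ int(A_i), and the forward itineraries of A under F and of Â under G coincide: for every h ≥ 0 there is an index i_h with F^h(A) ⊆ int(B_{i_h}) and G^h(Â) ⊆ int(A_{i_h}). -/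

import Mathlib

/-!
Common definitions for "Topological dynamics of generic piecewise continuous
contractive maps in n dimensions" (Catsigeras–Budelli).

`X` plays the role of the compact set `B ⊆ ℝⁿ` (homeomorphic to a compact ball),
endowed with a metric `dist` inducing its subspace topology: we model this by a
metric space `X` together with a topological embedding `j : X → ℝⁿ` and a
homeomorphism of `X` with the closed unit ball.
-/

namespace PWC

variable {X : Type} [MetricSpace X]

/-- A finite partition of the space `X` (the ball `B`): `m` nonempty compact pieces
covering `X`, with pairwise disjoint interiors. -/
def IsFinPartition {m : ℕ} (P : Fin m → Set X) : Prop :=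
  (∀ i, (P i).Nonempty) ∧ (∀ i, IsCompact (P i)) ∧ (⋃ i, P i) = Set.univ ∧
    ∀ i j : Fin m, i ≠ j → interior (P i) ∩ interior (P j) = ∅

/-- The separation line `S = ⋃ i ∂B_i` (frontiers taken in `B`). -/
def sepLine {m : ℕ} (P : Fin m → Set X) : Set X := ⋃ i, frontier (P i)

/-- A piecewise continuous map on `(B, {B_i})`: each `f i` is a homeomorphism of the
piece `P i` onto its image, and the image is contained in the interior of `B`
(i.e. of `Set.range j`) in `ℝⁿ`. -/
def IsPCMap {n m : ℕ} (j : X → EuclideanSpace ℝ (Fin n)) (P : Fin m → Set X)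
    (f : Fin m → X → X) : Prop :=
  ∀ i, ContinuousOn (f i) (P i) ∧ Set.InjOn (f i) (P i) ∧
    (∃ finv : X → X, ContinuousOn finv (f i '' P i) ∧ ∀ x ∈ P i, finv (f i x) = x) ∧
    ∀ x ∈ P i, j (f i x) ∈ interior (Set.range j)

/-- The separation property: different continuity pieces have disjoint images. -/
def SepProp {m : ℕ} (P : Fin m → Set X) (f : Fin m → X → X) : Prop :=
  ∀ i i' : Fin m, i ≠ i' → (f i '' P i) ∩ (f i' '' P i') = ∅

/-- `F` is uniformly locally contractive with contraction rate `lam ∈ (0,1)`. -/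
def LocContr {m : ℕ} (P : Fin m → Set X) (f : Fin m → X → X) (lam : ℝ) : Prop :=
  0 < lam ∧ lam < 1 ∧ ∀ i, ∀ x ∈ P i, ∀ y ∈ P i, dist (f i x) (f i y) ≤ lam * dist x y

/-- Image of a set: `F(H) = ⋃_{x ∈ H} {f i x : x ∈ B_i}`. -/
def setImage {m : ℕ} (P : Fin m → Set X) (f : Fin m → X → X) (H : Set X) : Set X :=
  ⋃ i, f i '' (P i ∩ H)

/-- Iterated image: `F⁰(H) = H`, `F^{k+1}(H) = F^k(F(H)) = F(F^k(H))`. -/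
def iterSet {m : ℕ} (P : Fin m → Set X) (f : Fin m → X → X) : ℕ → Set X → Set X
  | 0, H => H
  | k + 1, H => setImage P f (iterSet P f k H)

/-- A future orbit: `o (k+1) ∈ F (o k)` for all `k`. -/
def IsOrbit {m : ℕ} (P : Fin m → Set X) (f : Fin m → X → X) (o : ℕ → X) : Prop :=
  ∀ k : ℕ, ∃ i, o k ∈ P i ∧ o (k + 1) = f i (o k)

/-- The limit set of a sequence: points which are limits of some subsequence. -/
def orbitLimit (o : ℕ → X) : Set X :=
  {y | ∃ φ : ℕ → ℕ, StrictMono φ ∧ Filter.Tendsto (fun k => o (φ k)) Filter.atTop (nhds y)}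

/-- The limit set `L⁺(F)`: union of the limit sets of all future orbits of all points. -/
def limitSet {m : ℕ} (P : Fin m → Set X) (f : Fin m → X → X) : Set X :=
  ⋃ o ∈ {o : ℕ → X | IsOrbit P f o}, orbitLimit o

/-- `L` is a periodic orbit (limit cycle) of minimal period `p ≥ 1` of `F`. -/
def IsPeriodicOrbit {m : ℕ} (P : Fin m → Set X) (f : Fin m → X → X) (L : Set X)
    (p : ℕ) : Prop :=
  1 ≤ p ∧ ∃ o : ℕ → X, IsOrbit P f o ∧ (∀ k, o (k + p) = o k) ∧
    (∀ q : ℕ, 1 ≤ q → (∀ k, o (k + q) = o k) → p ≤ q) ∧ L = Set.range o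

/-- `F` is finally periodic: its limit set is the union of (at least one and) finitely
many periodic orbits. -/
def FinallyPeriodic {m : ℕ} (P : Fin m → Set X) (f : Fin m → X → X) : Prop :=
  ∃ (N : ℕ) (L : Fin N → Set X) (p : Fin N → ℕ), 1 ≤ N ∧
    (∀ a, IsPeriodicOrbit P f (L a) (p a)) ∧ limitSet P f = ⋃ a, L a

/-- `G = {g_i : A_i → B}` (with contraction rate `lamG`) is an `ε`-perturbation of
`F = {f_i : B_i → B}` (with contraction rate `lamF`). -/
def IsPerturbation {m : ℕ} (P : Fin m → Set X) (f : Fin m → X → X) (lamF : ℝ)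
    (Q : Fin m → Set X) (g : Fin m → X → X) (lamG : ℝ) (ε : ℝ) : Prop :=
  (∀ i, ∀ x ∈ P i ∩ Q i, dist (f i x) (g i x) < ε) ∧ |lamF - lamG| < ε ∧
    ∀ i, Metric.hausdorffDist (P i) (Q i) < ε

/-- The limit cycles `L a` (of periods `p a`) of `F` are persistent. -/
def PersistentCycles {n m : ℕ} (j : X → EuclideanSpace ℝ (Fin n)) (P : Fin m → Set X)
    (f : Fin m → X → X) (lamF : ℝ) {N : ℕ} (L : Fin N → Set X) (p : Fin N → ℕ) : Prop :=
  ∀ εs : ℝ, 0 < εs → ∃ ε : ℝ, 0 < ε ∧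
    ∀ (Q : Fin m → Set X) (g : Fin m → X → X) (lamG : ℝ),
      IsFinPartition Q → IsPCMap j Q g → LocContr Q g lamG →
      IsPerturbation P f lamF Q g lamG ε →
      ∃ LG : Fin N → Set X, (∀ a, IsPeriodicOrbit Q g (LG a) (p a)) ∧
        limitSet Q g = (⋃ a, LG a) ∧ ∀ a, Metric.hausdorffDist (LG a) (L a) < εs

/-- `F` is finally periodic with persistent limit cycles. -/
def FPwithPersistent {n m : ℕ} (j : X → EuclideanSpace ℝ (Fin n)) (P : Fin m → Set X)
    (f : Fin m → X → X) (lamF : ℝ) : Prop :=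
  ∃ (N : ℕ) (L : Fin N → Set X) (p : Fin N → ℕ), 1 ≤ N ∧
    (∀ a, IsPeriodicOrbit P f (L a) (p a)) ∧ limitSet P f = (⋃ a, L a) ∧
    PersistentCycles j P f lamF L p

/-- The atom of generation `w.length` with word `w`; the head of the list is the
*last* map applied, i.e. `atom [i_k, …, i_1] = f_{i_k} ∘ ⋯ ∘ f_{i_1} (B_{i_1})`,
restricted to the set where the composition is defined. -/
def atom {m : ℕ} (P : Fin m → Set X) (f : Fin m → X → X) : List (Fin m) → Set X
  | [] => Set.univ
  | i :: w => f i '' (P i ∩ atom P f w)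

end PWC


open PWC

/-!
The *exclusive region* of an index `i` is the set of points that lie in no piece other than the
`i`-th. These regions are open and cover the complement of the separation line, and `F^{k₀}(B)` is
compact, so the Lebesgue number lemma yields `r > 0` such that every ball of radius `r` centred in
`F^{k₀}(B)` lies in one exclusive region of `F`. A perturbation moves the pieces by less than `ε`,
so the ball of radius `r - ε` lies in the exclusive region of `G` with the same index.

Hence, along a word common to `F` and `G`, from time `k₀` on both maps are defined at the point
`x_s` of the `F`-orbit, and a contraction rate `μ < 1` of `G` gives
`dist(x_{s+1}, y_{s+1}) ≤ dist(f_i x_s, g_i x_s) + dist(g_i x_s, g_i y_s) ≤ ε + μ dist(x_s, y_s)`.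
Whatever happened during the first `k₀` steps, corresponding atoms of long words are therefore
within `r / 2` of each other and sit in exclusive regions with the same index `i`. Their images are
again the corresponding atoms of one word, the old one prolonged by `i`, and the argument repeats.
-/

namespace PWC

section ExclusiveRegion

variable {ι X : Type*} {P Q : ι → Set X} {i : ι}

/-- The points that belong to no piece other than `P i`. It stands in for the interior of `P i`:
a ball contained in it survives, slightly shrunk, a perturbation of the pieces, because each point
of a perturbed piece is close to the original piece with the same index. -/
def exclusiveRegion (P : ι → Set X) (i : ι) : Set X := {x | ∀ l, x ∈ P l → l = i}

theorem exclusiveRegion_subset (hP : ⋃ i, P i = Set.univ) : exclusiveRegion P i ⊆ P i := by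
  intro x hx
  obtain ⟨l, hl⟩ := Set.iUnion_eq_univ_iff.1 hP x
  exact hx l hl ▸ hl

theorem isOpen_exclusiveRegion [TopologicalSpace X] [Finite ι] (hP : ∀ i, IsClosed (P i)) :
    IsOpen (exclusiveRegion P i) := by
  have h : exclusiveRegion P i = ⋂ l, ⋂ _ : l ≠ i, (P l)ᶜ := by
    ext x
    simp only [exclusiveRegion, Set.mem_ofPred_eq, Set.mem_iInter, Set.mem_compl_iff]
    exact forall_congr' fun l => not_imp_not.symm
  rw [h]
  exact isOpen_iInter_of_finite fun l => isOpen_iInter_of_finite fun _ => (hP l).isOpen_compl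

theorem exclusiveRegion_subset_interior [TopologicalSpace X] [Finite ι]
    (hP : ∀ i, IsClosed (P i)) (hcover : ⋃ i, P i = Set.univ) :
    exclusiveRegion P i ⊆ interior (P i) :=
  interior_maximal (exclusiveRegion_subset hcover) (isOpen_exclusiveRegion hP)

theorem ball_sub_subset_exclusiveRegion [PseudoMetricSpace X] {x : X} {r ε : ℝ}
    (hfin : ∀ i, Metric.hausdorffEDist (P i) (Q i) ≠ ⊤)
    (hPQ : ∀ i, Metric.hausdorffDist (P i) (Q i) < ε)
    (hx : Metric.ball x r ⊆ exclusiveRegion P i) :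
    Metric.ball x (r - ε) ⊆ exclusiveRegion Q i := by
  intro y hy l hl
  obtain ⟨p, hp, hpy⟩ := Metric.exists_dist_lt_of_hausdorffDist_lt' hl (hPQ l) (hfin l)
  refine hx (Metric.mem_ball.2 ?_) l hp
  linarith [dist_triangle p y x, Metric.mem_ball.1 hy]

end ExclusiveRegion

section Partition

variable {X : Type} [MetricSpace X] {m : ℕ} {P Q : Fin m → Set X}

theorem IsFinPartition.isClosed (hP : IsFinPartition P) (i : Fin m) : IsClosed (P i) :=
  (hP.2.1 i).isClosed

theorem IsFinPartition.iUnion_eq_univ (hP : IsFinPartition P) : ⋃ i, P i = Set.univ :=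
  hP.2.2.1

theorem IsFinPartition.compactSpace (hP : IsFinPartition P) : CompactSpace X :=
  ⟨hP.iUnion_eq_univ ▸ isCompact_iUnion hP.2.1⟩

theorem IsFinPartition.hausdorffEDist_ne_top (hP : IsFinPartition P) (hQ : IsFinPartition Q)
    (i : Fin m) : Metric.hausdorffEDist (P i) (Q i) ≠ ⊤ :=
  Metric.hausdorffEDist_ne_top_of_nonempty_of_bounded (hP.1 i) (hQ.1 i)
    (hP.2.1 i).isBounded (hQ.2.1 i).isBounded

theorem IsFinPartition.compl_sepLine_subset (hP : IsFinPartition P) :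
    (sepLine P)ᶜ ⊆ ⋃ i, exclusiveRegion P i := by
  intro x hx
  have mem_interior : ∀ {i}, x ∈ P i → x ∈ interior (P i) := fun {i} hi =>
    by_contra fun hint => hx (Set.mem_iUnion.2 ⟨i, subset_closure hi, hint⟩)
  obtain ⟨i, hi⟩ := Set.iUnion_eq_univ_iff.1 hP.iUnion_eq_univ x
  refine Set.mem_iUnion.2 ⟨i, fun l hl => by_contra fun hne => ?_⟩
  exact (hP.2.2.2 l i hne).le ⟨mem_interior hl, mem_interior hi⟩

theorem IsFinPartition.exists_ball_subset_exclusiveRegion (hP : IsFinPartition P) {K : Set X}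
    (hK : IsCompact K) (hKS : Disjoint K (sepLine P)) :
    ∃ r > 0, ∀ x ∈ K, ∃ i, Metric.ball x r ⊆ exclusiveRegion P i :=
  lebesgue_number_lemma_of_metric hK (fun _ => isOpen_exclusiveRegion hP.isClosed)
    (hKS.subset_compl_right.trans hP.compl_sepLine_subset)

end Partition

section Atom

variable {X : Type} {m : ℕ} {P Q : Fin m → Set X} {f g : Fin m → X → X}

theorem setImage_mono {H K : Set X} (h : H ⊆ K) : setImage P f H ⊆ setImage P f K :=
  Set.iUnion_mono fun _ => Set.image_mono (Set.inter_subset_inter_right _ h)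

theorem iterSet_univ_antitone (P : Fin m → Set X) (f : Fin m → X → X) :
    Antitone fun k => iterSet P f k Set.univ := by
  refine antitone_nat_of_succ_le fun k => ?_
  induction k with
  | zero => exact Set.subset_univ _
  | succ k ih => exact setImage_mono ih

theorem atom_subset_iterSet_length (P : Fin m → Set X) (f : Fin m → X → X) (w : List (Fin m)) :
    atom P f w ⊆ iterSet P f w.length Set.univ := by
  induction w with
  | nil => exact Set.subset_univ _
  | cons i w ih =>
    exact (Set.image_mono (Set.inter_subset_inter_right _ ih)).trans
      (Set.subset_iUnion (fun l => f l '' (P l ∩ iterSet P f w.length Set.univ)) i)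

theorem atom_subset_iterSet (P : Fin m → Set X) (f : Fin m → X → X) {w : List (Fin m)} {k : ℕ}
    (hk : k ≤ w.length) : atom P f w ⊆ iterSet P f k Set.univ :=
  (atom_subset_iterSet_length P f w).trans (iterSet_univ_antitone P f hk)

theorem isCompact_iterSet [TopologicalSpace X] [T2Space X] (hP : ∀ i, IsCompact (P i))
    (hf : ∀ i, ContinuousOn (f i) (P i)) {H : Set X} (hH : IsCompact H) (k : ℕ) :
    IsCompact (iterSet P f k H) := by
  induction k with
  | zero => exact hH
  | succ k ih =>
    exact isCompact_iUnion fun i =>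
      ((hP i).inter ih).image_of_continuousOn ((hf i).mono Set.inter_subset_left)

theorem setImage_atom_eq_atom_cons {w : List (Fin m)} {i : Fin m}
    (hw : atom P f w ⊆ exclusiveRegion P i) : setImage P f (atom P f w) = atom P f (i :: w) := by
  refine Set.Subset.antisymm (Set.iUnion_subset fun l => ?_)
    (Set.subset_iUnion (fun l => f l '' (P l ∩ atom P f w)) i)
  rintro _ ⟨x, ⟨hxl, hxw⟩, rfl⟩
  obtain rfl := hw hxw l hxl
  exact ⟨x, ⟨hxl, hxw⟩, rfl⟩

theorem atom_cons_nonempty {w : List (Fin m)} {i : Fin m} (hne : (atom P f w).Nonempty)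
    (hw : atom P f w ⊆ P i) : (atom P f (i :: w)).Nonempty :=
  (hne.mono (Set.subset_inter hw subset_rfl)).image (f i)

/-- From generation `k` on, corresponding nonempty atoms of `F` and `G` lie in exclusive regions
with the same index; this is the property that propagates along the itineraries. -/
def AtomsSynchronized (P : Fin m → Set X) (f : Fin m → X → X) (Q : Fin m → Set X)
    (g : Fin m → X → X) (k : ℕ) : Prop :=
  ∀ w : List (Fin m), k ≤ w.length → (atom P f w).Nonempty → (atom Q g w).Nonempty →
    ∃ i, atom P f w ⊆ exclusiveRegion P i ∧ atom Q g w ⊆ exclusiveRegion Q i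

theorem atomsSynchronized_of_dist_lt [PseudoMetricSpace X] {r : ℝ} {k₀ k : ℕ} (hk : k₀ ≤ k)
    (hball : ∀ x ∈ iterSet P f k₀ Set.univ, ∃ i,
      Metric.ball x r ⊆ exclusiveRegion P i ∧ Metric.ball x (r / 2) ⊆ exclusiveRegion Q i)
    (hclose : ∀ w : List (Fin m), k ≤ w.length → ∀ x ∈ atom P f w, ∀ y ∈ atom Q g w,
      dist x y < r / 2) :
    AtomsSynchronized P f Q g k := by
  rintro w hw ⟨x, hx⟩ ⟨y, hy⟩
  obtain ⟨i, hiP, hiQ⟩ := hball x (atom_subset_iterSet P f (hk.trans hw) hx)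
  refine ⟨i, fun z hz => hiP (Metric.mem_ball.2 ?_), fun z hz => hiQ (Metric.mem_ball'.2 ?_)⟩
  · linarith [dist_triangle_right z x y, hclose w hw z hz y hy, hclose w hw x hx y hy]
  · exact hclose w hw x hx z hz

theorem AtomsSynchronized.exists_iterSet_eq_atom {k : ℕ} (hsync : AtomsSynchronized P f Q g k)
    (hP : ⋃ i, P i = Set.univ) (hQ : ⋃ i, Q i = Set.univ) {w : List (Fin m)} (hw : k ≤ w.length)
    (hA : (atom P f w).Nonempty) (hB : (atom Q g w).Nonempty) (h : ℕ) :
    ∃ v : List (Fin m), k ≤ v.length ∧ (atom P f v).Nonempty ∧ (atom Q g v).Nonempty ∧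
      iterSet P f h (atom P f w) = atom P f v ∧ iterSet Q g h (atom Q g w) = atom Q g v := by
  induction h with
  | zero => exact ⟨w, hw, hA, hB, rfl, rfl⟩
  | succ h ih =>
    obtain ⟨v, hv, hvA, hvB, hPv, hQv⟩ := ih
    obtain ⟨i, hi, hi'⟩ := hsync v hv hvA hvB
    refine ⟨i :: v, hv.trans (v.length.le_succ),
      atom_cons_nonempty hvA (hi.trans (exclusiveRegion_subset hP)),
      atom_cons_nonempty hvB (hi'.trans (exclusiveRegion_subset hQ)), ?_, ?_⟩
    · rw [iterSet, hPv, setImage_atom_eq_atom_cons hi]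
    · rw [iterSet, hQv, setImage_atom_eq_atom_cons hi']

theorem AtomsSynchronized.exists_iterSet_subset_exclusiveRegion {k : ℕ}
    (hsync : AtomsSynchronized P f Q g k)
    (hP : ⋃ i, P i = Set.univ) (hQ : ⋃ i, Q i = Set.univ) {w : List (Fin m)} (hw : k ≤ w.length)
    (hA : (atom P f w).Nonempty) (hB : (atom Q g w).Nonempty) (h : ℕ) :
    ∃ i, iterSet P f h (atom P f w) ⊆ exclusiveRegion P i ∧
      iterSet Q g h (atom Q g w) ⊆ exclusiveRegion Q i := by
  obtain ⟨v, hv, hvA, hvB, hPv, hQv⟩ := hsync.exists_iterSet_eq_atom hP hQ hw hA hB h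
  rw [hPv, hQv]
  exact hsync v hv hvA hvB

end Atom

section Contraction

variable {X : Type} [MetricSpace X] {m : ℕ} {P Q : Fin m → Set X} {f g : Fin m → X → X}

theorem LocContr.continuousOn {lam : ℝ} (hf : LocContr P f lam) (i : Fin m) :
    ContinuousOn (f i) (P i) :=
  (LipschitzOnWith.of_dist_le_mul (K := ⟨lam, hf.1.le⟩) (hf.2.2 i)).continuousOn

theorem LocContr.mono {lam μ : ℝ} (hf : LocContr P f lam) (hlam : lam ≤ μ) (hμ : μ < 1) :
    LocContr P f μ :=
  ⟨hf.1.trans_le hlam, hμ, fun i x hx y hy =>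
    (hf.2.2 i x hx y hy).trans (mul_le_mul_of_nonneg_right hlam dist_nonneg)⟩

theorem dist_le_of_mem_atom {ε μ C : ℝ} {k₀ : ℕ} (hg : LocContr Q g μ) (hε : 0 ≤ ε)
    (hfg : ∀ i, ∀ x ∈ P i ∩ Q i, dist (f i x) (g i x) ≤ ε)
    (hPQ : ∀ x ∈ iterSet P f k₀ Set.univ, ∀ i, x ∈ P i → x ∈ Q i)
    (hC : ∀ x y : X, dist x y ≤ C) (t : ℕ) {w : List (Fin m)} (hw : k₀ + t ≤ w.length) {x y : X}
    (hx : x ∈ atom P f w) (hy : y ∈ atom Q g w) :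
    dist x y ≤ μ ^ t * C + ε / (1 - μ) := by
  obtain ⟨hμ0, hμ1, hcontr⟩ := hg
  have h1μ : 0 < 1 - μ := sub_pos.2 hμ1
  induction t generalizing w x y with
  | zero => simpa using (hC x y).trans (le_add_of_nonneg_right (div_nonneg hε h1μ.le))
  | succ t ih =>
    obtain _ | ⟨i, w⟩ := w
    · simp at hw
    obtain ⟨u, ⟨huP, huw⟩, rfl⟩ := hx
    obtain ⟨v, ⟨hvQ, hvw⟩, rfl⟩ := hy
    have hlen : k₀ + t ≤ w.length := by simpa [← add_assoc] using hw
    have huQ : u ∈ Q i := hPQ u (atom_subset_iterSet P f (by omega) huw) i huP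
    calc dist (f i u) (g i v)
        ≤ dist (f i u) (g i u) + dist (g i u) (g i v) := dist_triangle _ _ _
      _ ≤ ε + μ * dist u v := add_le_add (hfg i u ⟨huP, huQ⟩) (hcontr i u huQ v hvQ)
      _ ≤ ε + μ * (μ ^ t * C + ε / (1 - μ)) := by gcongr; exact ih hlen huw hvw
      _ = μ ^ (t + 1) * C + ε / (1 - μ) := by field_simp; ring

theorem exists_pow_mul_add_div_lt {lam : ℝ} (h0 : 0 ≤ lam) (h1 : lam < 1) (C : ℝ) {δ ρ : ℝ}
    (hδ : 0 < δ) (hρ : 0 < ρ) :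
    ∃ ε > 0, ε < ρ ∧ ∃ μ < 1, lam + ε ≤ μ ∧ ∃ T : ℕ, μ ^ T * C + ε / (1 - μ) < δ := by
  obtain ⟨μ, hlamμ, hμ1⟩ := exists_between h1
  have h1μ : 0 < 1 - μ := sub_pos.2 hμ1
  obtain ⟨ε, hε0, hε⟩ : ∃ ε, 0 < ε ∧ ε < min ρ (min (μ - lam) (δ / 2 * (1 - μ))) :=
    exists_between (lt_min hρ (lt_min (sub_pos.2 hlamμ) (by positivity)))
  simp only [lt_min_iff] at hε
  obtain ⟨hερ, hεlam, hεδ⟩ := hε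
  obtain ⟨T, hT⟩ : ∃ T : ℕ, μ ^ T * C < δ / 2 := by
    have htendsto := (tendsto_pow_atTop_nhds_zero_of_lt_one (h0.trans hlamμ.le) hμ1).mul_const C
    rw [zero_mul] at htendsto
    exact (htendsto.eventually_lt_const (half_pos hδ)).exists
  have hquot : ε / (1 - μ) < δ / 2 := (div_lt_iff₀ h1μ).2 hεδ
  exact ⟨ε, hε0, hερ, μ, hμ1, by linarith, T, by linarith⟩

theorem IsPerturbation.atomsSynchronized {lamF lamG ε μ r C : ℝ} {k₀ T : ℕ}
    (hG : IsPerturbation P f lamF Q g lamG ε) (hP : IsFinPartition P) (hQ : IsFinPartition Q)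
    (hg : LocContr Q g lamG) (hε : 0 < ε) (hεr : ε ≤ r / 2) (hμ : lamF + ε ≤ μ) (hμ1 : μ < 1)
    (hball : ∀ x ∈ iterSet P f k₀ Set.univ, ∃ i, Metric.ball x r ⊆ exclusiveRegion P i)
    (hC : ∀ x y : X, dist x y ≤ C) (hT : μ ^ T * C + ε / (1 - μ) < r / 2) :
    AtomsSynchronized P f Q g (k₀ + T) := by
  obtain ⟨hfg, hlam, hPQ⟩ := hG
  have hballQ : ∀ x ∈ iterSet P f k₀ Set.univ, ∃ i,
      Metric.ball x r ⊆ exclusiveRegion P i ∧ Metric.ball x (r / 2) ⊆ exclusiveRegion Q i := by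
    intro x hx
    obtain ⟨i, hi⟩ := hball x hx
    exact ⟨i, hi, (Metric.ball_subset_ball (by linarith)).trans
      (ball_sub_subset_exclusiveRegion (hP.hausdorffEDist_ne_top hQ) hPQ hi)⟩
  have hmem : ∀ x ∈ iterSet P f k₀ Set.univ, ∀ i, x ∈ P i → x ∈ Q i := by
    intro x hx i hxi
    obtain ⟨l, hlP, hlQ⟩ := hballQ x hx
    obtain rfl := hlP (Metric.mem_ball_self (by linarith)) i hxi
    exact exclusiveRegion_subset hQ.iUnion_eq_univ (hlQ (Metric.mem_ball_self (by linarith)))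
  have hgμ : LocContr Q g μ := hg.mono (by linarith [(abs_lt.1 hlam).1]) hμ1
  exact atomsSynchronized_of_dist_lt (Nat.le_add_right k₀ T) hballQ fun w hw x hx y hy =>
    (dist_le_of_mem_atom hgμ hε.le (fun i x hx => (hfg i x hx).le) hmem hC T hw hx hy).trans_lt hT

end Contraction

end PWC

theorem itineraries_of_corresponding_atoms_coincide_general
    {m : ℕ} {X : Type} [MetricSpace X] {P : Fin m → Set X} {f : Fin m → X → X} {lamF : ℝ}
    (hP : IsFinPartition P) (hlc : LocContr P f lamF) {k₀ : ℕ}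
    (hS : Disjoint (iterSet P f k₀ Set.univ) (sepLine P)) {ρ : ℝ} (hρ : 0 < ρ) :
    ∃ ε₁ : ℝ, 0 < ε₁ ∧ ε₁ < ρ ∧ ∃ k : ℕ, k₀ ≤ k ∧
      ∀ (Q : Fin m → Set X) (g : Fin m → X → X) (lamG : ℝ),
        IsFinPartition Q → LocContr Q g lamG → IsPerturbation P f lamF Q g lamG ε₁ →
        ∀ w : List (Fin m), k ≤ w.length →
          (atom P f w).Nonempty → (atom Q g w).Nonempty →
          ∃ i : Fin m, atom P f w ⊆ interior (P i) ∧
            (∀ i', atom P f w ⊆ interior (P i') → i' = i) ∧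
            atom Q g w ⊆ interior (Q i) ∧
            ∀ h : ℕ, ∃ ih : Fin m,
              iterSet P f h (atom P f w) ⊆ interior (P ih) ∧
              iterSet Q g h (atom Q g w) ⊆ interior (Q ih) := by
  have := hP.compactSpace
  have hC : ∀ x y : X, dist x y ≤ Metric.diam (Set.univ : Set X) := fun x y =>
    Metric.dist_le_diam_of_mem isCompact_univ.isBounded (Set.mem_univ x) (Set.mem_univ y)
  obtain ⟨r, hr, hball⟩ := hP.exists_ball_subset_exclusiveRegion
    (isCompact_iterSet hP.2.1 hlc.continuousOn isCompact_univ k₀) hS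
  obtain ⟨ε, hε, hεmin, μ, hμ1, hμ, T, hT⟩ := exists_pow_mul_add_div_lt hlc.1.le hlc.2.1
    (Metric.diam (Set.univ : Set X)) (half_pos hr) (lt_min hρ (half_pos hr))
  obtain ⟨hερ, hεr⟩ := lt_min_iff.1 hεmin
  refine ⟨ε, hε, hερ, k₀ + T, Nat.le_add_right k₀ T, fun Q g lamG hQ hg hG w hw hA hB => ?_⟩
  have hsync := hG.atomsSynchronized hP hQ hg hε hεr.le hμ hμ1 hball hC hT
  have hintP {i} := exclusiveRegion_subset_interior (i := i) hP.isClosed hP.iUnion_eq_univ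
  have hintQ {i} := exclusiveRegion_subset_interior (i := i) hQ.isClosed hQ.iUnion_eq_univ
  obtain ⟨i, hi, hi'⟩ := hsync w hw hA hB
  refine ⟨i, hi.trans hintP, fun i' hi'P => ?_, hi'.trans hintQ, fun h => ?_⟩
  · obtain ⟨x, hx⟩ := hA
    exact hi hx i' (interior_subset (hi'P hx))
  · obtain ⟨l, hl, hl'⟩ := hsync.exists_iterSet_subset_exclusiveRegion
      hP.iUnion_eq_univ hQ.iUnion_eq_univ hw hA hB h
    exact ⟨l, hl.trans hintP, hl'.trans hintQ⟩

/-- Statements Q and T: If `d := dist(F^{k₀}(B), S) > 0`, there exist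
`ε₁ ∈ (0, d/3)` and `k ≥ k₀` such that for every `ε₁`-perturbation `G` of `F` whose atoms
of generation `k` (and those of `F`) have diameter less than `d/6`, each pair of
corresponding nonempty atoms `A`, `Â` lies in the interiors of the *same-indexed*
continuity pieces, with unique such index for `A`, and the forward itineraries of `A`
under `F` and of `Â` under `G` coincide. -/
theorem itineraries_of_corresponding_atoms_coincide
    {n m : ℕ} {X : Type} [MetricSpace X]
    (j : X → EuclideanSpace ℝ (Fin n))
    (hj : Topology.IsEmbedding j)
    (hball : Nonempty (X ≃ₜ (Metric.closedBall (0 : EuclideanSpace ℝ (Fin n)) 1)))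
    (hfr : ∀ (M : Set X) (y : X), y ∉ M →
      Metric.infDist y M = Metric.infDist y (frontier M))
    (P : Fin m → Set X) (f : Fin m → X → X) (lamF : ℝ)
    (hP : IsFinPartition P) (hf : IsPCMap j P f) (hlc : LocContr P f lamF)
    (hsep : SepProp P f)
    (k₀ : ℕ) (hk₀ : 1 ≤ k₀) (d : ℝ) (hd : 0 < d)
    (hdS : ∀ x ∈ iterSet P f k₀ Set.univ, d ≤ Metric.infDist x (sepLine P)) :
    ∃ ε₁ : ℝ, 0 < ε₁ ∧ ε₁ < d / 3 ∧ ∃ k : ℕ, k₀ ≤ k ∧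
      ∀ (Q : Fin m → Set X) (g : Fin m → X → X) (lamG : ℝ),
        IsFinPartition Q → IsPCMap j Q g → LocContr Q g lamG →
        IsPerturbation P f lamF Q g lamG ε₁ →
        (∀ w : List (Fin m), w.length = k →
          Metric.diam (atom P f w) < d / 6 ∧ Metric.diam (atom Q g w) < d / 6) →
        ∀ w : List (Fin m), w.length = k →
          (atom P f w).Nonempty → (atom Q g w).Nonempty →
          ∃ i : Fin m, atom P f w ⊆ interior (P i) ∧
            (∀ i', atom P f w ⊆ interior (P i') → i' = i) ∧
            atom Q g w ⊆ interior (Q i) ∧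
            ∀ h : ℕ, ∃ ih : Fin m,
              iterSet P f h (atom P f w) ⊆ interior (P ih) ∧
              iterSet Q g h (atom Q g w) ⊆ interior (Q ih) := by
  have hS : Disjoint (iterSet P f k₀ Set.univ) (sepLine P) := Set.disjoint_left.2 fun x hx hxS =>
    (hd.trans_le (hdS x hx)).ne' (Metric.infDist_zero_of_mem hxS)
  obtain ⟨ε, hε, hεd, k, hk, H⟩ :=
    itineraries_of_corresponding_atoms_coincide_general hP hlc hS (div_pos hd three_pos)
  exact ⟨ε, hε, hεd, k, hk, fun Q g lamG hQ _ hg hG _ w hw => H Q g lamG hQ hg hG w hw.ge⟩
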